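/- The tree inversion enumerator evaluated at q = −1 equals the zigzag (Euler) number: I_n(−1) = E_n, where E_n is the number of alternating permutations in S_n. -/

import Mathlib

open Finset

/-- `j` lies on the unique path from `i` to the root `0` in the tree `T`. -/
def OnPath {n : ℕ} (T : SimpleGraph (Fin (n+1))) (i j : Fin (n+1)) : Prop :=
  ∀ p : T.Walk i 0, p.IsPath → j ∈ p.support

/-- The number of inversions of a tree on `{0,...,n}` rooted at `0`: pairs
`(i,j)` with `1 ≤ i < j ≤ n` such that `j` is on the path from `i` to `0`. -/
noncomputable def treeInv {n : ℕ} (T : SimpleGraph (Fin (n+1))) : ℕ :=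
  Nat.card {p : Fin (n+1) × Fin (n+1) //
    0 < p.1.val ∧ p.1 < p.2 ∧ OnPath T p.1 p.2}

/-- A permutation `σ = σ₁σ₂⋯σₙ ∈ S_n` (0-indexed here) is alternating:
`σ₁ < σ₂ > σ₃ < σ₄ > ⋯`. -/
def IsAlternating {n : ℕ} (σ : Equiv.Perm (Fin n)) : Prop :=
  ∀ p : Fin n × Fin n, p.1.val + 1 = p.2.val →
    (Even p.1.val → σ p.1 < σ p.2) ∧ (¬ Even p.1.val → σ p.2 < σ p.1)

/-!
A tree with root `0` is determined by its ancestor relation, and the ancestor relations that arise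
are those of the rooted forests on the remaining vertices. Inversions are read off this relation.
In a rooted forest, split off the tree containing a fixed vertex: if it has `k + 1` vertices, its
root can be any of them, and when the root is the `i`-th smallest vertex (`i = 0, …, k`) it
contributes the factor `q ^ i`. Hence
`I_{n+1}(q) = ∑ k, (n choose k) (1 + q + ⋯ + q ^ k) I_k(q) I_{n-k}(q)`.
At `q = -1` the geometric sum is `1` for even `k` and `0` for odd `k`. This is the recursion for
alternating words in `n + 1` distinct letters obtained by cutting them at their smallest letter,
which is preceded by an even number `k` of letters.
-/

section MallowsRiordan

/-- The Mallows–Riordan polynomials, evaluated at `q`. They are defined here by their recursion;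
`finsum_pow_treeInv` identifies them with the tree inversion enumerators `I_n(q)`. -/
def mallowsRiordan {R : Type*} [CommSemiring R] (q : R) : ℕ → R
  | 0 => 1
  | n + 1 => ∑ k : Fin (n + 1),
      n.choose k • ((∑ i ∈ range (k + 1), q ^ i) * (mallowsRiordan q k * mallowsRiordan q (n - k)))

theorem mallowsRiordan_zero {R : Type*} [CommSemiring R] (q : R) : mallowsRiordan q 0 = 1 := by
  rw [mallowsRiordan]

variable {α : Type*} [DecidableEq α]

theorem mallowsRiordan_card_add_one {R : Type*} [CommSemiring R] (q : R) (S : Finset α) :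
    mallowsRiordan q (#S + 1) = ∑ A ∈ S.powerset,
      (∑ i ∈ range (#A + 1), q ^ i) * (mallowsRiordan q #A * mallowsRiordan q #(S \ A)) := by
  rw [mallowsRiordan, ← Finset.sum_range (n := #S + 1) fun k => (#S).choose k •
    ((∑ i ∈ range (k + 1), q ^ i) * (mallowsRiordan q k * mallowsRiordan q (#S - k))),
    ← sum_powerset_apply_card]
  refine sum_congr rfl fun A hA => ?_
  rw [card_sdiff_of_subset (mem_powerset.1 hA)]

theorem mallowsRiordan_neg_one_card_add_one {R : Type*} [CommRing R] (S : Finset α) :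
    mallowsRiordan (-1 : R) (#S + 1) = ∑ A ∈ S.powerset with Even #A,
      mallowsRiordan (-1) #A * mallowsRiordan (-1) #(S \ A) := by
  rw [mallowsRiordan_card_add_one, sum_filter]
  refine sum_congr rfl fun A _ => ?_
  rw [neg_one_geom_sum]
  by_cases hA : Even #A <;> simp [hA, Nat.even_add_one]

end MallowsRiordan

section AlternatingWords

variable {α : Type*}

/-- A word `x₁x₂x₃⋯` is alternating with respect to `r` if `x₁ r x₂`, `x₃ r x₂`, `x₃ r x₄`, ….
Deleting the first letter exchanges `r` with its converse. -/
def IsAltWord : (α → α → Prop) → List α → Prop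
  | _, [] => True
  | _, [_] => True
  | r, x :: y :: l => r x y ∧ IsAltWord (Function.swap r) (y :: l)

theorem isAltWord_iff_getElem : ∀ (r : α → α → Prop) (l : List α), IsAltWord r l ↔
    ∀ i (_ : i + 1 < l.length), (Even i → r l[i] l[i + 1]) ∧ (¬ Even i → r l[i + 1] l[i])
  | _, [] => by simp [IsAltWord]
  | _, [_] => by simp [IsAltWord]
  | r, x :: y :: l => by
    rw [IsAltWord, isAltWord_iff_getElem (Function.swap r) (y :: l)]
    refine Iff.trans (and_congr ?_ (forall_congr' fun i => ?_)) Nat.and_forall_add_one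
    · simp
    simp only [List.length_cons, Nat.add_lt_add_iff_right, List.getElem_cons_succ,
      Nat.even_add_one, not_not, Function.swap]
    exact forall_congr' fun _ => and_comm

theorem isAltWord_append_cons {r : α → α → Prop} [Std.Asymm r] {m : α} {l₂ : List α}
    (h₂ : ∀ x ∈ l₂, r m x) : ∀ {l₁ : List α}, (∀ x ∈ l₁, r m x) →
      (IsAltWord r (l₁ ++ m :: l₂) ↔
        Even l₁.length ∧ IsAltWord r l₁ ∧ IsAltWord (Function.swap r) l₂)
  | [], _ => by
    cases l₂ with
    | nil => simp [IsAltWord]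
    | cons y l => simp [IsAltWord, h₂ y]
  | [x], h₁ => by
    have : ¬ r x m := Std.Asymm.asymm _ _ (h₁ x (by simp))
    simp [IsAltWord, this]
  | [x, y], h₁ => by
    have hnil := isAltWord_append_cons h₂ (l₁ := []) (by simp)
    simp only [List.nil_append] at hnil
    simp [IsAltWord, Function.swap, h₁ y, hnil]
  | x :: y :: z :: l, h₁ => by
    have htail := isAltWord_append_cons h₂ (l₁ := z :: l)
      fun w hw => h₁ w (List.mem_cons_of_mem _ (List.mem_cons_of_mem _ hw))
    have hlen : Even (x :: y :: z :: l).length ↔ Even (z :: l).length := by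
      simp [Nat.even_add_one]
    simp only [List.cons_append, IsAltWord, hlen] at htail ⊢
    tauto

open Classical in
/-- The alternating words with respect to `r` that use each letter of `S` exactly once. -/
noncomputable def altWords (r : α → α → Prop) (S : Finset α) : Finset (List α) :=
  S.val.lists.toFinset.filter (IsAltWord r)

theorem mem_altWords {r : α → α → Prop} {S : Finset α} {l : List α} :
    l ∈ altWords r S ↔ S.val = l ∧ IsAltWord r l := by
  simp [altWords, Multiset.mem_lists_iff]

theorem mem_iff_of_mem_altWords {r : α → α → Prop} {S : Finset α} {l : List α}
    (hl : l ∈ altWords r S) {x : α} : x ∈ l ↔ x ∈ S := by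
  rw [← Multiset.mem_coe, ← (mem_altWords.1 hl).1, mem_val]

theorem altWords_empty (r : α → α → Prop) : altWords r ∅ = {[]} := by
  ext l
  simp only [mem_altWords, empty_val, mem_singleton, eq_comm (a := (0 : Multiset α)),
    Multiset.coe_eq_zero]
  exact ⟨And.left, fun hl => ⟨hl, hl ▸ trivial⟩⟩

theorem append_cons_mem_altWords_insert_iff [DecidableEq α] {r : α → α → Prop} [Std.Asymm r]
    {m : α} {S : Finset α} (hm : m ∉ S) (hmin : ∀ x ∈ S, r m x) {l₁ l₂ : List α} :
    l₁ ++ m :: l₂ ∈ altWords r (insert m S) ↔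
      ∃ A ⊆ S, Even #A ∧ l₁ ∈ altWords r A ∧ l₂ ∈ altWords (Function.swap r) (S \ A) := by
  have hval : (insert m S).val = ↑(l₁ ++ m :: l₂) ↔ S.val = l₁ + (l₂ : Multiset α) := by
    rw [insert_val_of_notMem hm, ← Multiset.coe_add, ← Multiset.cons_coe, Multiset.add_cons,
      Multiset.cons_inj_right]
  have hword (hS : S.val = l₁ + (l₂ : Multiset α)) := isAltWord_append_cons
    (fun x hx => hmin x (by rw [← mem_val, hS]; simp [hx]))
    (fun x hx => hmin x (by rw [← mem_val, hS]; simp [hx])) (r := r) (m := m) (l₁ := l₁) (l₂ := l₂)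
  simp only [mem_altWords, hval]
  constructor
  · rintro ⟨hS, halt⟩
    obtain ⟨heven, halt₁, halt₂⟩ := (hword hS).1 halt
    obtain ⟨A, hA⟩ : ∃ A : Finset α, A.val = l₁ :=
      ⟨⟨l₁, Multiset.nodup_of_le (Multiset.le_add_right _ _) (hS ▸ S.nodup)⟩, rfl⟩
    refine ⟨A, ?_, ?_, ⟨hA, halt₁⟩, ?_, halt₂⟩
    · rw [← val_le_iff, hS, hA]
      exact Multiset.le_add_right _ _
    · rwa [card_def, hA, Multiset.coe_card]
    · rw [sdiff_val, hS, hA, add_tsub_cancel_left]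
  · rintro ⟨A, hA, heven, ⟨hA₁, halt₁⟩, hA₂, halt₂⟩
    have hS : S.val = l₁ + (l₂ : Multiset α) := by
      rw [← hA₁, ← hA₂, sdiff_val, add_tsub_cancel_of_le (val_le_iff.2 hA)]
    refine ⟨hS, (hword hS).2 ⟨?_, halt₁, halt₂⟩⟩
    rwa [← Multiset.coe_card, ← hA₁]

theorem card_altWords_insert [DecidableEq α] {r : α → α → Prop} [Std.Asymm r] {m : α}
    {S : Finset α} (hm : m ∉ S) (hmin : ∀ x ∈ S, r m x) :
    #(altWords r (insert m S)) = ∑ A ∈ S.powerset with Even #A,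
      #(altWords r A) * #(altWords (Function.swap r) (S \ A)) := by
  simp_rw [← card_product]
  rw [← card_sigma]
  refine (card_bij (fun p _ => p.2.1 ++ m :: p.2.2) ?_ ?_ ?_).symm
  · rintro ⟨A, l₁, l₂⟩ h
    simp only [mem_sigma, mem_filter, mem_powerset, mem_product] at h
    exact (append_cons_mem_altWords_insert_iff hm hmin).2 ⟨A, h.1.1, h.1.2, h.2⟩
  · rintro ⟨A, l₁, l₂⟩ h ⟨B, k₁, k₂⟩ h' heq
    simp only [mem_sigma, mem_filter, mem_powerset, mem_product] at h h'
    obtain ⟨⟨hA, -⟩, hl₁, hl₂⟩ := h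
    obtain ⟨⟨hB, -⟩, hk₁, hk₂⟩ := h'
    have hml₁ : m ∉ l₁ := fun h => hm (hA ((mem_iff_of_mem_altWords hl₁).1 h))
    have hmk₁ : m ∉ k₁ := fun h => hm (hB ((mem_iff_of_mem_altWords hk₁).1 h))
    have hml₂ : m ∉ l₂ := fun h => hm (sdiff_subset ((mem_iff_of_mem_altWords hl₂).1 h))
    obtain ⟨rfl, -, rfl⟩ := (List.append_cons_inj_of_notMem hml₁ hml₂).1 heq
    obtain rfl : A = B := val_injective ((mem_altWords.1 hl₁).1.trans (mem_altWords.1 hk₁).1.symm)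
    rfl
  · intro l hl
    obtain ⟨l₁, l₂, rfl⟩ :=
      List.append_of_mem ((mem_iff_of_mem_altWords hl).2 (mem_insert_self m S))
    obtain ⟨A, hA, heven, hl⟩ := (append_cons_mem_altWords_insert_iff hm hmin).1 hl
    refine ⟨⟨A, l₁, l₂⟩, ?_, rfl⟩
    simp only [mem_sigma, mem_filter, mem_powerset, mem_product]
    exact ⟨⟨hA, heven⟩, hl⟩

theorem card_altWords (r : α → α → Prop) [IsStrictTotalOrder α r] (S : Finset α) :
    (#(altWords r S) : ℤ) = mallowsRiordan (-1) #S := by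
  classical
  induction S using Finset.strongInduction generalizing r with
  | H S ih =>
  obtain rfl | hS := S.eq_empty_or_nonempty
  · simp [altWords_empty, mallowsRiordan_zero]
  obtain ⟨m, hm, hmin⟩ : ∃ m ∈ S, ∀ x ∈ S, x ≠ m → r m x := by
    let := linearOrderOfSTO r
    exact ⟨S.min' hS, S.min'_mem hS, fun x hx hne => (S.min'_le x hx).lt_of_ne' hne⟩
  obtain ⟨T, hmT, rfl⟩ : ∃ T, m ∉ T ∧ S = insert m T :=
    ⟨S.erase m, notMem_erase m S, (insert_erase hm).symm⟩
  replace hmin x (hx : x ∈ T) : r m x :=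
    hmin x (mem_insert_of_mem hx) (ne_of_mem_of_not_mem hx hmT)
  have hT : T ⊂ insert m T := ssubset_insert hmT
  rw [card_altWords_insert hmT hmin, card_insert_of_notMem hmT,
    mallowsRiordan_neg_one_card_add_one]
  push_cast
  refine sum_congr rfl fun A hA => ?_
  have hAT : A ⊆ T := mem_powerset.1 (mem_filter.1 hA).1
  rw [ih A (hAT.trans_ssubset hT), ih (T \ A) (sdiff_subset.trans_ssubset hT)]

theorem isAlternating_iff_isAltWord_ofFn {n : ℕ} (σ : Equiv.Perm (Fin n)) :
    IsAlternating σ ↔ IsAltWord (· < ·) (List.ofFn σ) := by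
  rw [isAltWord_iff_getElem]
  constructor
  · intro h i hi
    rw [List.length_ofFn] at hi
    simpa using h (⟨i, by omega⟩, ⟨i + 1, hi⟩) rfl
  · rintro h ⟨⟨i, hi⟩, ⟨j, hj⟩⟩ hij
    obtain rfl : i + 1 = j := hij
    have hstep := h i (by rwa [List.length_ofFn])
    simpa only [List.getElem_ofFn] using hstep

theorem card_isAlternating (n : ℕ) :
    Nat.card {σ : Equiv.Perm (Fin n) // IsAlternating σ} =
      #(altWords (· < ·) (univ : Finset (Fin n))) := by
  rw [← Nat.card_eq_finsetCard]
  refine Nat.card_congr (Equiv.ofBijective (fun σ => ⟨List.ofFn σ.1, mem_altWords.2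
    ⟨?_, (isAlternating_iff_isAltWord_ofFn _).1 σ.2⟩⟩) ⟨fun σ τ h => ?_, fun ⟨l, hl⟩ => ?_⟩)
  · refine (Multiset.Nodup.ext univ.nodup
      (Multiset.coe_nodup.2 (List.nodup_ofFn.2 σ.1.injective))).2 fun a => ?_
    simpa [List.mem_ofFn] using σ.1.surjective a
  · exact Subtype.ext (DFunLike.coe_injective (List.ofFn_injective (Subtype.ext_iff.1 h)))
  · obtain ⟨hval, halt⟩ := mem_altWords.1 hl
    have hlen : l.length = n := by simpa using (congrArg Multiset.card hval).symm
    have hnodup : l.Nodup := Multiset.coe_nodup.1 (hval ▸ univ.nodup)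
    let σ : Equiv.Perm (Fin n) := (finCongr hlen.symm).trans (hnodup.getEquivOfForallMemList l
      fun x => (mem_iff_of_mem_altWords hl).2 (mem_univ x))
    have hσ : List.ofFn σ = l := List.ext_getElem (by simp [hlen]) fun i _ _ => by simp [σ]
    exact ⟨⟨σ, (isAlternating_iff_isAltWord_ofFn σ).2 (hσ ▸ halt)⟩, Subtype.ext hσ⟩

end AlternatingWords

theorem sum_powerset_filter_mem {α : Type*} [DecidableEq α] {M : Type*} [AddCommMonoid M] {a : α}
    {S : Finset α} (ha : a ∈ S) (f : Finset α → M) :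
    ∑ C ∈ S.powerset with a ∈ C, f C = ∑ A ∈ (S.erase a).powerset, f (insert a A) := by
  refine sum_nbij' (erase · a) (insert a) ?_ ?_ ?_ ?_ ?_ <;>
    simp only [mem_filter, mem_powerset]
  · exact fun C hC => erase_subset_erase a hC.1
  · exact fun A hA =>
      ⟨insert_subset ha (hA.trans (erase_subset a S)), mem_insert_self a A⟩
  · exact fun C hC => insert_erase hC.2
  · exact fun A hA => erase_insert fun h => notMem_erase a S (hA h)
  · exact fun C hC => by rw [insert_erase hC.2]

section ForestOrders

variable {α : Type*}

/-- A rooted forest on the vertex set `S`, encoded by its strict ancestor relation: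
`(x, y) ∈ R` means that `y` is a proper ancestor of `x`. -/
structure IsForestOrder (S : Finset α) (R : Finset (α × α)) : Prop where
  subset : R ⊆ S ×ˢ S
  irrefl : ∀ x, (x, x) ∉ R
  trans : ∀ {x y z}, (x, y) ∈ R → (y, z) ∈ R → (x, z) ∈ R
  trichotomous : ∀ {x y z}, (x, y) ∈ R → (x, z) ∈ R → y = z ∨ (y, z) ∈ R ∨ (z, y) ∈ R

/-- `C` is the vertex set of a tree of the forest `R`, and `r` is the root of that tree. -/
structure IsComponent (R : Finset (α × α)) (C : Finset α) (r : α) : Prop where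
  mem_iff : ∀ x, x ∈ C ↔ x = r ∨ (x, r) ∈ R
  root_maximal : ∀ y, (r, y) ∉ R

variable {S C D : Finset α} {R R₁ R₂ : Finset (α × α)} {a r x y : α}

namespace IsForestOrder

theorem mem_and_mem (h : IsForestOrder S R) (hxy : (x, y) ∈ R) : x ∈ S ∧ y ∈ S :=
  mem_product.1 (h.subset hxy)

theorem exists_root (h : IsForestOrder S R) (a : α) :
    ∃ r, (r = a ∨ (a, r) ∈ R) ∧ ∀ y, (r, y) ∉ R := by
  classical
  induction hn : #{y ∈ S | (a, y) ∈ R} using Nat.strong_induction_on generalizing a with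
  | _ n ih =>
  by_cases ha : ∃ b, (a, b) ∈ R
  · obtain ⟨b, hab⟩ := ha
    have hlt : #{y ∈ S | (b, y) ∈ R} < n := by
      rw [← hn]
      refine card_lt_card ((ssubset_iff_of_subset ?_).2 ⟨b, ?_, ?_⟩)
      · exact monotone_filter_right _ fun y _ hby => h.trans hab hby
      · exact mem_filter.2 ⟨(h.mem_and_mem hab).2, hab⟩
      · exact fun hb => h.irrefl b (mem_filter.1 hb).2
    obtain ⟨r, hbr, hr⟩ := ih _ hlt b rfl
    refine ⟨r, .inr ?_, hr⟩
    obtain rfl | hbr := hbr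
    exacts [hab, h.trans hab hbr]
  · exact ⟨a, .inl rfl, fun y hy => ha ⟨y, hy⟩⟩

theorem exists_isComponent (h : IsForestOrder S R) (ha : a ∈ S) :
    ∃ C ⊆ S, ∃ r ∈ C, a ∈ C ∧ IsComponent R C r := by
  classical
  obtain ⟨r, har, hr⟩ := h.exists_root a
  have hrS : r ∈ S := har.elim (· ▸ ha) fun h' => (h.mem_and_mem h').2
  have hC x : x ∈ S.filter (fun x => x = r ∨ (x, r) ∈ R) ↔ x = r ∨ (x, r) ∈ R :=
    mem_filter.trans <| and_iff_right_of_imp <|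
      Or.rec (fun hx => hx ▸ hrS) fun hx => (h.mem_and_mem hx).1
  exact ⟨_, filter_subset _ _, r, (hC r).2 (.inl rfl), (hC a).2 (har.imp_left Eq.symm), hC, hr⟩

theorem isComponent_unique {C' : Finset α} {r' : α} (h : IsForestOrder S R)
    (hC : IsComponent R C r) (hC' : IsComponent R C' r') (ha : a ∈ C) (ha' : a ∈ C') :
    C = C' ∧ r = r' := by
  obtain rfl : r = r' := by
    rw [hC.mem_iff] at ha
    rw [hC'.mem_iff] at ha'
    obtain rfl | ha := ha
    · exact ha'.resolve_right (hC.root_maximal _)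
    obtain rfl | ha' := ha'
    · exact absurd ha (hC'.root_maximal _)
    exact (h.trichotomous ha ha').resolve_right
      (not_or_intro (hC.root_maximal _) (hC'.root_maximal _))
  exact ⟨ext fun x => (hC.mem_iff x).trans (hC'.mem_iff x).symm, rfl⟩

end IsForestOrder

open Classical in
/-- The ancestor relations of the rooted forests on the vertex set `S`. -/
noncomputable def forestOrders (S : Finset α) : Finset (Finset (α × α)) :=
  (S ×ˢ S).powerset.filter (IsForestOrder S)

theorem mem_forestOrders : R ∈ forestOrders S ↔ IsForestOrder S R := by
  classical
  rw [forestOrders, mem_filter, mem_powerset]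
  exact and_iff_right_of_imp IsForestOrder.subset

theorem forestOrders_empty : forestOrders (∅ : Finset α) = {∅} := by
  ext R
  rw [mem_forestOrders, mem_singleton]
  refine ⟨fun h => subset_empty.1 h.subset, ?_⟩
  rintro rfl
  constructor <;> simp

variable [DecidableEq α]

/-- The forest consisting of the tree on `C` with root `r`, whose branches form the forest `R₁`,
together with the forest `R₂`. -/
def graft (C : Finset α) (r : α) (R₁ R₂ : Finset (α × α)) : Finset (α × α) :=
  R₁ ∪ C.erase r ×ˢ {r} ∪ R₂

theorem mem_graft : (x, y) ∈ graft C r R₁ R₂ ↔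
    (x, y) ∈ R₁ ∨ ((x ≠ r ∧ x ∈ C) ∧ y = r) ∨ (x, y) ∈ R₂ := by
  simp only [graft, mem_union, mem_product, mem_erase, mem_singleton, or_assoc]

theorem IsForestOrder.inter_product (h : IsForestOrder S R) (T : Finset α) :
    IsForestOrder T (R ∩ T ×ˢ T) where
  subset := inter_subset_right
  irrefl x hx := h.irrefl x (mem_inter.1 hx).1
  trans := by
    simp only [mem_inter, mem_product]
    exact fun hxy hyz => ⟨h.trans hxy.1 hyz.1, hxy.2.1, hyz.2.2⟩
  trichotomous := by
    simp only [mem_inter, mem_product]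
    exact fun hxy hxz => (h.trichotomous hxy.1 hxz.1).imp_right <| Or.imp
      (⟨·, hxy.2.2, hxz.2.2⟩) (⟨·, hxz.2.2, hxy.2.2⟩)

theorem isForestOrder_graft (hr : r ∈ C) (hCD : Disjoint C D)
    (h₁ : IsForestOrder (C.erase r) R₁) (h₂ : IsForestOrder D R₂) :
    IsForestOrder (C ∪ D) (graft C r R₁ R₂) := by
  rw [disjoint_left] at hCD
  refine ⟨fun ⟨x, y⟩ => ?_, fun x => ?_, fun {x y z} => ?_, fun {x y z} => ?_⟩ <;>
    simp only [mem_graft, mem_product, mem_union]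
  · grind [→ IsForestOrder.mem_and_mem]
  · grind [→ IsForestOrder.mem_and_mem, h₁.irrefl, h₂.irrefl]
  · grind [→ IsForestOrder.mem_and_mem, h₁.trans, h₂.trans]
  · grind [→ IsForestOrder.mem_and_mem, h₁.trichotomous, h₂.trichotomous]

theorem isComponent_graft (hr : r ∈ C) (hCD : Disjoint C D)
    (h₁ : IsForestOrder (C.erase r) R₁) (h₂ : IsForestOrder D R₂) :
    IsComponent (graft C r R₁ R₂) C r := by
  rw [disjoint_left] at hCD
  refine ⟨fun x => ?_, fun y => ?_⟩ <;> rw [mem_graft] <;>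
    grind [→ IsForestOrder.mem_and_mem]

theorem graft_inter_erase (hCD : Disjoint C D) (h₁ : IsForestOrder (C.erase r) R₁)
    (h₂ : IsForestOrder D R₂) : graft C r R₁ R₂ ∩ C.erase r ×ˢ C.erase r = R₁ := by
  rw [disjoint_left] at hCD
  ext ⟨x, y⟩
  simp only [mem_inter, mem_graft, mem_product, mem_erase]
  grind [→ IsForestOrder.mem_and_mem]

theorem graft_inter_right (hCD : Disjoint C D) (h₁ : IsForestOrder (C.erase r) R₁)
    (h₂ : IsForestOrder D R₂) : graft C r R₁ R₂ ∩ D ×ˢ D = R₂ := by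
  rw [disjoint_left] at hCD
  ext ⟨x, y⟩
  simp only [mem_inter, mem_graft, mem_product]
  grind [→ IsForestOrder.mem_and_mem]

theorem graft_inter_inter (h : IsForestOrder S R) (hC : IsComponent R C r) :
    graft C r (R ∩ C.erase r ×ˢ C.erase r) (R ∩ (S \ C) ×ˢ (S \ C)) = R := by
  ext ⟨x, y⟩
  simp only [mem_graft, mem_inter, mem_product, mem_erase, mem_sdiff, hC.mem_iff]
  grind [→ IsForestOrder.mem_and_mem, h.trans, h.trichotomous, hC.root_maximal]

end ForestOrders

section ForestInversions

variable {α : Type*} [LinearOrder α]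

/-- The number of inversions of the forest with ancestor relation `R`. -/
def inversions (R : Finset (α × α)) : ℕ :=
  #{p ∈ R | p.1 < p.2}

theorem inversions_graft {C D : Finset α} {r : α} {R₁ R₂ : Finset (α × α)}
    (hCD : Disjoint C D) (h₁ : IsForestOrder (C.erase r) R₁) (h₂ : IsForestOrder D R₂) :
    inversions (graft C r R₁ R₂) =
      #{x ∈ C | x < r} + (inversions R₁ + inversions R₂) := by
  have hroot : #{p ∈ C.erase r ×ˢ {r} | p.1 < p.2} = #{x ∈ C | x < r} := by
    rw [product_singleton, filter_map, card_map]
    congr 1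
    ext x
    simp only [mem_filter, mem_erase, Function.comp_apply, Function.Embedding.coeFn_mk]
    grind
  have hdisj₁ : Disjoint R₁ (C.erase r ×ˢ {r}) :=
    (disjoint_product.2 (.inr (by simp))).mono_left h₁.subset
  have hdisj₂ : Disjoint (R₁ ∪ C.erase r ×ˢ {r}) R₂ := by
    have hCD' : Disjoint (C.erase r) D := hCD.mono_left (erase_subset r C)
    exact (disjoint_union_left.2 ⟨(disjoint_product.2 (.inl hCD')).mono_left h₁.subset,
      disjoint_product.2 (.inl hCD')⟩).mono_right h₂.subset
  rw [inversions, graft, filter_union, card_union_of_disjoint (disjoint_filter_filter hdisj₂),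
    filter_union, card_union_of_disjoint (disjoint_filter_filter hdisj₁), hroot, inversions,
    inversions]
  ring

variable {M : Type*} [CommSemiring M] (q : M)

/-- The inversion enumerator, evaluated at `q`, of the rooted forests on the vertex set `S`. -/
noncomputable def forestInvEnum (S : Finset α) : M :=
  ∑ R ∈ forestOrders S, q ^ inversions R

/-- Split off the tree containing `a`: it has vertex set `C` and root `r`, and removing the root
leaves a forest on `C.erase r`. -/
theorem forestInvEnum_eq_sum_component {a : α} {S : Finset α} (ha : a ∈ S) :
    forestInvEnum q S = ∑ C ∈ S.powerset with a ∈ C, ∑ r ∈ C,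
      q ^ #{x ∈ C | x < r} * (forestInvEnum q (C.erase r) * forestInvEnum q (S \ C)) := by
  simp only [forestInvEnum, sum_mul_sum]
  simp only [mul_sum]
  simp only [sum_sigma']
  refine (sum_bij (fun p _ => graft p.1 p.2.1 p.2.2.1 p.2.2.2) ?_ ?_ ?_ ?_).symm <;>
    simp only [mem_sigma, mem_filter, mem_powerset, mem_forestOrders]
  · rintro ⟨C, r, R₁, R₂⟩ ⟨⟨hCS, -⟩, hr, h₁, h₂⟩
    simpa only [union_sdiff_of_subset hCS] using isForestOrder_graft hr disjoint_sdiff h₁ h₂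
  · rintro ⟨C, r, R₁, R₂⟩ ⟨⟨-, haC⟩, hr, h₁, h₂⟩
      ⟨C', r', R₁', R₂'⟩ ⟨⟨-, haC'⟩, hr', h₁', h₂'⟩ heq
    dsimp only at haC hr h₁ h₂ haC' hr' h₁' h₂' heq
    obtain ⟨rfl, rfl⟩ := (isForestOrder_graft hr disjoint_sdiff h₁ h₂).isComponent_unique
      (isComponent_graft hr disjoint_sdiff h₁ h₂)
      (heq ▸ isComponent_graft hr' disjoint_sdiff h₁' h₂') haC haC'
    obtain rfl : R₁ = R₁' := by
      rw [← graft_inter_erase disjoint_sdiff h₁ h₂, heq, graft_inter_erase disjoint_sdiff h₁' h₂']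
    obtain rfl : R₂ = R₂' := by
      rw [← graft_inter_right disjoint_sdiff h₁ h₂, heq,
        graft_inter_right disjoint_sdiff h₁' h₂']
    rfl
  · intro R hR
    obtain ⟨C, hCS, r, hr, haC, hC⟩ := hR.exists_isComponent ha
    exact ⟨⟨C, r, _, _⟩, ⟨⟨hCS, haC⟩, hr, hR.inter_product _, hR.inter_product _⟩,
      graft_inter_inter hR hC⟩
  · rintro ⟨C, r, R₁, R₂⟩ ⟨-, -, h₁, h₂⟩
    simp only [inversions_graft disjoint_sdiff h₁ h₂, pow_add]

theorem sum_pow_card_filter_lt (C : Finset α) :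
    ∑ r ∈ C, q ^ #{x ∈ C | x < r} = ∑ i ∈ range #C, q ^ i := by
  induction C using Finset.induction_on_max with
  | empty => simp
  | insert a s hlt ih =>
    have ha : a ∉ s := fun h => (hlt a h).false
    have hbelow_max : {x ∈ insert a s | x < a} = s := by
      ext x
      grind
    have hbelow r (hr : r ∈ s) : {x ∈ insert a s | x < r} = {x ∈ s | x < r} := by
      grind
    rw [sum_insert ha, card_insert_of_notMem ha, sum_range_succ, hbelow_max, ← ih, add_comm,
      sum_congr rfl fun r hr => by rw [hbelow r hr]]

theorem forestInvEnum_eq_mallowsRiordan (S : Finset α) :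
    forestInvEnum q S = mallowsRiordan q #S := by
  induction S using Finset.strongInduction with
  | H S ih =>
  obtain rfl | ⟨a, ha⟩ := S.eq_empty_or_nonempty
  · simp [forestInvEnum, forestOrders_empty, inversions, mallowsRiordan_zero]
  rw [forestInvEnum_eq_sum_component q ha, sum_powerset_filter_mem ha,
    ← card_erase_add_one ha, mallowsRiordan_card_add_one]
  refine sum_congr rfl fun A hA => ?_
  have hAS : insert a A ⊆ S :=
    insert_subset ha ((mem_powerset.1 hA).trans (erase_subset a S))
  have haA : a ∉ A := fun h => notMem_erase a S (mem_powerset.1 hA h)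
  have hsdiff : S \ insert a A = S.erase a \ A := by grind
  rw [← card_insert_of_notMem haA, ← sum_pow_card_filter_lt, sum_mul]
  refine sum_congr rfl fun r hr => ?_
  rw [ih _ ((erase_ssubset hr).trans_subset hAS), card_erase_of_mem hr,
    card_insert_of_notMem haA, Nat.add_sub_cancel, hsdiff,
    ih _ (sdiff_subset.trans_ssubset (erase_ssubset ha))]

end ForestInversions

section RootPaths

open SimpleGraph

variable {V : Type*} {G : SimpleGraph V} {r i j k : V}

/-- Every path from `i` to `r` in `G` visits `j`. In a tree with root `r` this is the ancestor
relation: `j` is `i` or an ancestor of `i`. The relation `OnPath T` is `OnPathTo T 0`. -/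
def OnPathTo (G : SimpleGraph V) (r i j : V) : Prop :=
  ∀ p : G.Walk i r, p.IsPath → j ∈ p.support

theorem onPathTo_iff_mem_support (hG : G.IsAcyclic) {p : G.Walk i r} (hp : p.IsPath) :
    OnPathTo G r i j ↔ j ∈ p.support := by
  refine ⟨fun h => h p hp, fun hj p' hp' => ?_⟩
  obtain rfl : p' = p := congrArg Subtype.val ((hG.subsingleton_path i r).elim ⟨p', hp'⟩ ⟨p, hp⟩)
  exact hj

namespace OnPathTo

theorem refl : OnPathTo G r i i := fun p _ => p.start_mem_support

theorem root : OnPathTo G r i r := fun p _ => p.end_mem_support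

theorem eq_root (h : OnPathTo G r r j) : j = r := by
  simpa using h .nil .nil

theorem trans (hij : OnPathTo G r i j) (hjk : OnPathTo G r j k) : OnPathTo G r i k := by
  classical
  intro p hp
  have hj := hij p hp
  exact p.support_dropUntil_subset_support hj (hjk _ (hp.dropUntil hj))

theorem dist_lt (hG : G.Connected) (h : OnPathTo G r i j) (hne : i ≠ j) :
    G.dist j r < G.dist i r := by
  classical
  obtain ⟨p, hp, hlen⟩ := hG.exists_path_of_dist i r
  rw [← hlen]
  exact (dist_le (p.dropUntil j (h p hp))).trans_lt
    (Walk.length_dropUntil_lt_length (h p hp) hne.symm)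

theorem antisymm (hG : G.Connected) (hij : OnPathTo G r i j) (hji : OnPathTo G r j i) :
    i = j := by
  by_contra hne
  exact (hij.dist_lt hG hne).asymm (hji.dist_lt hG (Ne.symm hne))

theorem total (hG : G.IsTree) (hij : OnPathTo G r i j) (hik : OnPathTo G r i k) :
    OnPathTo G r j k ∨ OnPathTo G r k j := by
  classical
  obtain ⟨p, hp, -⟩ := hG.existsUnique_path i r
  have hj := hij p hp
  have hk := hik p hp
  rw [← p.take_spec hj, Walk.mem_support_append_iff] at hk
  obtain hk | hk := hk
  · right
    have hsplit : ((p.takeUntil j hj).takeUntil k hk).append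
        (((p.takeUntil j hj).dropUntil k hk).append (p.dropUntil j hj)) = p := by
      rw [Walk.append_assoc, Walk.take_spec, Walk.take_spec]
    rw [onPathTo_iff_mem_support hG.isAcyclic (hsplit ▸ hp).of_append_right]
    exact (Walk.mem_support_append_iff _ _).2 (.inl (Walk.end_mem_support _))
  · left
    rwa [onPathTo_iff_mem_support hG.isAcyclic (hp.dropUntil hj)]

theorem iff_of_adj (hG : G.IsTree) (hadj : G.Adj i j) (hij : OnPathTo G r i j) :
    OnPathTo G r i k ↔ k = i ∨ OnPathTo G r j k := by
  obtain ⟨p, hp, -⟩ := hG.existsUnique_path j r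
  have hi : i ∉ p.support := fun hi => hadj.ne
    (hij.antisymm hG.connected ((onPathTo_iff_mem_support hG.isAcyclic hp).2 hi))
  rw [onPathTo_iff_mem_support hG.isAcyclic hp,
    onPathTo_iff_mem_support hG.isAcyclic (hp.cons hi (h := hadj)), Walk.support_cons,
    List.mem_cons]

theorem or_of_adj (hG : G.IsTree) (hadj : G.Adj i j) : OnPathTo G r i j ∨ OnPathTo G r j i := by
  obtain ⟨p, hp, -⟩ := hG.existsUnique_path j r
  by_cases hi : i ∈ p.support
  · exact .inr ((onPathTo_iff_mem_support hG.isAcyclic hp).2 hi)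
  · exact .inl ((onPathTo_iff_mem_support hG.isAcyclic (hp.cons hi (h := hadj))).2 (by simp))

end OnPathTo

end RootPaths

section HasseTree

open SimpleGraph

variable {V : Type*} [PartialOrder V] {G : SimpleGraph V} {i j k : V}

theorem le_of_covBy_of_lt (hchain : ∀ i : V, IsChain (· ≤ ·) (Set.Ici i)) (hij : i ⋖ j)
    (hik : i < k) : j ≤ k := by
  obtain hjk | hkj := (hchain i).total hij.le hik.le
  · exact hjk
  · obtain rfl | rfl := hij.eq_or_eq hik.le hkj
    exacts [hik.false.elim, le_rfl]

variable [OrderTop V]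

theorem exists_isPath_hasse [Finite V] (hchain : ∀ i : V, IsChain (· ≤ ·) (Set.Ici i)) (i : V) :
    ∃ p : (hasse V).Walk i ⊤, p.IsPath ∧ ∀ j, j ∈ p.support ↔ i ≤ j := by
  induction i using WellFoundedGT.induction with
  | _ i ih =>
  obtain rfl | hi := eq_or_ne i ⊤
  · exact ⟨.nil, .nil, by simp⟩
  obtain ⟨j, hij, -⟩ := exists_covBy_le_of_lt hi.lt_top
  obtain ⟨p, hp, hmem⟩ := ih j hij.lt
  have hadj : (hasse V).Adj i j := .inl hij
  refine ⟨.cons hadj p, hp.cons ((hmem i).not.2 hij.lt.not_ge), fun k => ?_⟩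
  rw [Walk.support_cons, List.mem_cons, hmem]
  refine ⟨?_, fun hik => hik.eq_or_lt.imp Eq.symm (le_of_covBy_of_lt hchain hij)⟩
  rintro (rfl | hjk)
  exacts [le_rfl, hij.le.trans hjk]

/-- Such a dart is found where the walk leaves `Set.Iic j`. -/
theorem exists_dart_covBy (hchain : ∀ i : V, IsChain (· ≤ ·) (Set.Ici i)) (hG : G ≤ hasse V)
    (p : G.Walk i ⊤) (hij : i ≤ j) (hj : j ≠ ⊤) : ∃ d ∈ p.darts, d.fst = j ∧ j ⋖ d.snd := by
  obtain ⟨d, hd, hfst, hsnd⟩ := p.exists_boundary_dart (Set.Iic j) hij fun h => hj (top_le_iff.1 h)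
  rw [Set.mem_Iic] at hfst hsnd
  have hcov : d.fst ⋖ d.snd := (hG d.adj).resolve_right fun h => hsnd (h.le.trans hfst)
  have hle : j ≤ d.snd := ((hchain d.fst).total hfst hcov.le).resolve_right hsnd
  obtain h | h := hcov.eq_or_eq hfst hle
  · exact ⟨d, hd, h.symm, h ▸ hcov⟩
  · exact absurd h.ge hsnd

theorem isTree_hasse [Finite V] (hchain : ∀ i : V, IsChain (· ≤ ·) (Set.Ici i)) :
    (hasse V).IsTree := by
  have hconn : (hasse V).Connected := (connected_iff_exists_forall_reachable _).2
    ⟨⊤, fun i => (exists_isPath_hasse hchain i).choose.reachable.symm⟩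
  refine isTree_of_minimal_connected ⟨hconn, fun G hGconn hG => ?_⟩
  have hadj {i j : V} (hij : i ⋖ j) : G.Adj i j := by
    obtain ⟨p⟩ := hGconn.preconnected i ⊤
    obtain ⟨d, -, rfl, hcov⟩ := exists_dart_covBy hchain hG p le_rfl hij.lt.ne_top
    obtain rfl : d.snd = j :=
      (le_of_covBy_of_lt hchain hcov hij.lt).antisymm (le_of_covBy_of_lt hchain hij hcov.lt)
    exact d.adj
  exact fun i j hij => hij.elim hadj fun h => (hadj h).symm

theorem onPathTo_hasse_iff [Finite V] (hchain : ∀ i : V, IsChain (· ≤ ·) (Set.Ici i)) :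
    OnPathTo (hasse V) ⊤ i j ↔ i ≤ j := by
  refine ⟨fun h => ?_, fun hij p _ => ?_⟩
  · obtain ⟨p, hp, hmem⟩ := exists_isPath_hasse hchain i
    exact (hmem j).1 (h p hp)
  · obtain rfl | hj := eq_or_ne j ⊤
    · exact p.end_mem_support
    · obtain ⟨d, hd, rfl, -⟩ := exists_dart_covBy hchain le_rfl p hij hj
      exact p.dart_fst_mem_support_of_mem_darts hd

theorem eq_hasse_of_onPathTo_iff_le [Finite V] (hG : G.IsTree)
    (hle : ∀ i j, OnPathTo G ⊤ i j ↔ i ≤ j) : G = hasse V := by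
  have hchain (i : V) : IsChain (· ≤ ·) (Set.Ici i) := fun j hij k hik _ => by
    simp only [Set.mem_Ici, ← hle] at hij hik ⊢
    exact hij.total hG hik
  have hcov {i j : V} (hadj : G.Adj i j) (hij : OnPathTo G ⊤ i j) : i ⋖ j := by
    refine ⟨((hle i j).1 hij).lt_of_ne hadj.ne, fun k hik hkj => ?_⟩
    obtain rfl | hjk := (hij.iff_of_adj hG hadj).1 ((hle i k).2 hik.le)
    exacts [hik.false, (hkj.trans_le ((hle j k).1 hjk)).false]
  have hG_le : G ≤ hasse V := fun i j hadj =>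
    (OnPathTo.or_of_adj hG hadj).imp (hcov hadj) (hcov hadj.symm)
  exact hG_le.antisymm
    ((isTree_iff_minimal_connected.1 (isTree_hasse hchain)).le_of_le hG.connected hG_le)

end HasseTree

section TreesAndForestOrders

open SimpleGraph

variable {V : Type*} [Fintype V] {G : SimpleGraph V} {r i j : V} {R : Finset (V × V)}

open Classical in
/-- The ancestor relation of the forest that is left of a tree `G` after removing its root `r`,
in the encoding of `IsForestOrder`. -/
noncomputable def properAncestors (G : SimpleGraph V) (r : V) : Finset (V × V) :=
  {p | p.1 ≠ p.2 ∧ p.2 ≠ r ∧ OnPathTo G r p.1 p.2}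

theorem mem_properAncestors :
    (i, j) ∈ properAncestors G r ↔ i ≠ j ∧ j ≠ r ∧ OnPathTo G r i j := by
  simp [properAncestors]

theorem onPathTo_iff_mem_properAncestors :
    OnPathTo G r i j ↔ i = j ∨ j = r ∨ (i, j) ∈ properAncestors G r := by
  rw [mem_properAncestors]
  refine ⟨by tauto, ?_⟩
  rintro (rfl | rfl | h)
  exacts [.refl, .root, h.2.2]

variable [DecidableEq V]

theorem isForestOrder_properAncestors (hG : G.IsTree) (r : V) :
    IsForestOrder (univ.erase r) (properAncestors G r) where
  subset := fun ⟨i, j⟩ h => by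
    obtain ⟨-, hj, h⟩ := mem_properAncestors.1 h
    have hi : i ≠ r := by
      rintro rfl
      exact hj h.eq_root
    simp [hi, hj]
  irrefl i h := (mem_properAncestors.1 h).1 rfl
  trans {i j k} hij hjk := by
    rw [mem_properAncestors] at hij hjk ⊢
    refine ⟨?_, hjk.2.1, hij.2.2.trans hjk.2.2⟩
    rintro rfl
    exact hij.1 (hij.2.2.antisymm hG.connected hjk.2.2)
  trichotomous {i j k} hij hik := by
    rw [mem_properAncestors] at hij hik
    have htotal := hij.2.2.total hG hik.2.2
    simp only [mem_properAncestors]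
    tauto

namespace IsForestOrder

theorem ne_and_ne (h : IsForestOrder (univ.erase r) R) (hij : (i, j) ∈ R) : i ≠ r ∧ j ≠ r := by
  simpa using h.mem_and_mem hij

/-- The order on the vertices of the tree that consists of a root `r` joined to the roots of the
forest `R`; ancestors are larger. -/
abbrev partialOrder (h : IsForestOrder (univ.erase r) R) : PartialOrder V where
  le i j := i = j ∨ j = r ∨ (i, j) ∈ R
  le_refl i := .inl rfl
  le_trans i j k := by grind [h.ne_and_ne, h.trans]
  le_antisymm i j := by grind [h.ne_and_ne, h.trans, h.irrefl]

theorem existsUnique_isTree (h : IsForestOrder (univ.erase r) R) :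
    ∃! G : SimpleGraph V, G.IsTree ∧ properAncestors G r = R := by
  let := h.partialOrder
  let : OrderTop V := { top := r, le_top := fun i => .inr (.inl rfl) }
  have hchain (i : V) : IsChain (· ≤ ·) (Set.Ici i) := by
    rintro j (hij : i = j ∨ j = r ∨ (i, j) ∈ R) k (hik : i = k ∨ k = r ∨ (i, k) ∈ R) -
    change (j = k ∨ k = r ∨ (j, k) ∈ R) ∨ (k = j ∨ j = r ∨ (k, j) ∈ R)
    grind [h.trichotomous]
  refine ⟨hasse V, ⟨isTree_hasse hchain, ?_⟩, fun G ⟨hG, hR⟩ => ?_⟩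
  · ext ⟨i, j⟩
    have hle : OnPathTo (hasse V) r i j ↔ i = j ∨ j = r ∨ (i, j) ∈ R := onPathTo_hasse_iff hchain
    rw [mem_properAncestors, hle]
    grind [h.ne_and_ne, h.irrefl]
  · subst hR
    exact eq_hasse_of_onPathTo_iff_le hG fun _ _ => onPathTo_iff_mem_properAncestors

end IsForestOrder

theorem finsum_properAncestors {M : Type*} [AddCommMonoid M] (r : V) (f : Finset (V × V) → M) :
    ∑ᶠ T : {G : SimpleGraph V // G.IsTree}, f (properAncestors T.val r) =
      ∑ R ∈ forestOrders (univ.erase r), f R := by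
  rw [← finsum_mem_coe_finset]
  refine (finsum_subtype_eq_finsum_cond (f := fun G => f (properAncestors G r)) _).trans ?_
  refine finsum_mem_eq_of_bijOn (properAncestors · r) ⟨fun G hG => ?_, ?_, fun R hR => ?_⟩
    fun _ _ => rfl
  · exact mem_coe.2 (mem_forestOrders.2 (isForestOrder_properAncestors hG r))
  · intro G hG G' hG' heq
    exact (isForestOrder_properAncestors hG' r).existsUnique_isTree.unique ⟨hG, heq⟩ ⟨hG', rfl⟩
  · exact (mem_forestOrders.1 (mem_coe.1 hR)).existsUnique_isTree.exists

end TreesAndForestOrders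

theorem inversions_properAncestors {n : ℕ} (T : SimpleGraph (Fin (n + 1))) :
    inversions (properAncestors T 0) = treeInv T := by
  rw [inversions, treeInv, ← Nat.card_eq_finsetCard]
  refine Nat.card_congr (Equiv.subtypeEquivRight fun ⟨i, j⟩ => ?_)
  rw [mem_filter, mem_properAncestors]
  constructor
  · rintro ⟨⟨hij, hj, h⟩, hlt⟩
    refine ⟨Nat.pos_of_ne_zero fun hi => hj ?_, hlt, h⟩
    obtain rfl : i = 0 := Fin.ext hi
    exact h.eq_root
  · rintro ⟨hi, hij, h⟩
    exact ⟨⟨hij.ne, Fin.ne_of_gt (hi.trans hij), h⟩, hij⟩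

theorem finsum_pow_treeInv {M : Type*} [CommSemiring M] (q : M) (n : ℕ) :
    ∑ᶠ T : {G : SimpleGraph (Fin (n + 1)) // G.IsTree}, q ^ treeInv T.val =
      mallowsRiordan q n := by
  simp only [← inversions_properAncestors]
  rw [finsum_properAncestors 0 (q ^ inversions ·), ← forestInvEnum, forestInvEnum_eq_mallowsRiordan,
    card_erase_of_mem (mem_univ 0), card_univ, Fintype.card_fin, Nat.add_sub_cancel]

/-- `I_n(-1) = E_n`: the tree inversion enumerator evaluated at `q = -1`
equals the number of alternating permutations in `S_n`. -/
theorem treeInvEnum_neg_one (n : ℕ) :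
    (∑ᶠ T : {G : SimpleGraph (Fin (n+1)) // G.IsTree}, (-1 : ℤ) ^ treeInv T.val)
      = Nat.card {σ : Equiv.Perm (Fin n) // IsAlternating σ} := by
  rw [finsum_pow_treeInv, card_isAlternating, card_altWords, card_univ, Fintype.card_fin]
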